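/- Let A be a finite set of nonzero rational numbers, let K be a positive integer with |AA| ≤ K|A|, let k ≥ 2 be an integer, and let λ be a nonzero rational number with -λ ∉ A. Then |(A+λ)^{(k)}| ≥ |A|^k / (8k^4)^{kK}. -/

import Mathlib

open Finset Pointwise

/-- The `k`-fold product set of a finite set `B` of rationals:
`B^(k) = {b₁ ⋯ b_k : bᵢ ∈ B}`. -/
def kfoldProd (k : ℕ) (B : Finset ℚ) : Finset ℚ :=
  (Fintype.piFinset fun _ : Fin k => B).image fun f => ∏ i, f i

/-!
After dilating, take the shift to be `1`. Call `y ≥ x` extremal for `x` if `x * y` is not also a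
product of two elements exceeding `x`. The extremal products of `A` are essentially distinct, so
`|AA| ≤ K|A|` forces some `x`, with at least `|A| / K` elements above it in absolute value, to have
at most `K` extremal partners, and these generate everything above `x` multiplicatively. Hence the
`p`-adic sizes of the products of a large `B ⊆ A` live in an affine space of dimension less than
`K`, and fewer than `K` primes determine such a product up to sign. By pigeonhole we may also fix
the signs in `B` and, at each of these primes, the side of the unit circle on which `B` lies.

The `k`-fold multiplicative energy of `B + 1` is bounded one prime at a time. If all `|b|_p < 1`,
then in `∏ (1 + xᵢ) = ∏ (1 + yᵢ)` the largest `p`-adic size among the `2k` variables cannot occur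
only once, as it would dominate the difference of the two sides. So two variables lie in a common
fibre of `|·|_p`, and Hölder's inequality for characters bounds the energy in terms of those of the
fibres, at the cost of a factor `4k²` for the pair of positions. If all `|b|_p > 1`, inverting the
variables reduces to the previous case provided that `∏ xᵢ = ∏ yᵢ`; this holds once the primes of
the first kind have been used up, since then `|1 + b|_p` reveals every remaining size. When all
primes are exhausted the fibres are singletons, and Cauchy–Schwarz turns the energy bound into a
lower bound for the number of products.
-/

open scoped ComplexConjugate NNReal ENNReal WithZero

section Energy

variable {α M N : Type*} [CommMonoid M] [DecidableEq M] [CommMonoid N] [DecidableEq N] {k : ℕ}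

/-- The solutions of `φ x₁ ⋯ φ x_k = φ y₁ ⋯ φ y_k` with each variable in its own prescribed set;
`Sum.inl` indexes the variables on the left, `Sum.inr` those on the right. -/
def mulSolutions (φ : α → M) (S : Fin k ⊕ Fin k → Finset α) : Finset (Fin k ⊕ Fin k → α) :=
  {x ∈ Fintype.piFinset S | ∏ i, φ (x (.inl i)) = ∏ i, φ (x (.inr i))}

/-- The `k`-fold multiplicative energy of the family `φ b`, `b ∈ B`. Keeping the parametrization
`φ` lets the energy of a shift `B + 1` be discussed in terms of subsets of `B`. -/
def kfoldEnergy (φ : α → M) (k : ℕ) (B : Finset α) : ℕ :=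
  #(mulSolutions φ fun _ : Fin k ⊕ Fin k => B)

theorem mem_mulSolutions {φ : α → M} {S : Fin k ⊕ Fin k → Finset α} {x : Fin k ⊕ Fin k → α} :
    x ∈ mulSolutions φ S ↔
      (∀ i, x i ∈ S i) ∧ ∏ i, φ (x (.inl i)) = ∏ i, φ (x (.inr i)) := by
  rw [mulSolutions, mem_filter, Fintype.mem_piFinset]

theorem mulSolutions_mono (φ : α → M) {S T : Fin k ⊕ Fin k → Finset α} (h : ∀ i, S i ⊆ T i) :
    mulSolutions φ S ⊆ mulSolutions φ T :=
  filter_subset_filter _ (Fintype.piFinset_subset _ _ h)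

theorem mulSolutions_eq_of_prod_eq_iff {φ : α → M} {ψ : α → N} {U : Finset α}
    (h : ∀ x y : Fin k → α, (∀ i, x i ∈ U) → (∀ i, y i ∈ U) →
      (∏ i, φ (x i) = ∏ i, φ (y i) ↔ ∏ i, ψ (x i) = ∏ i, ψ (y i)))
    {S : Fin k ⊕ Fin k → Finset α} (hS : ∀ i, S i ⊆ U) : mulSolutions φ S = mulSolutions ψ S :=
  filter_congr fun _ hx =>
    have hxU := fun i => hS i (Fintype.mem_piFinset.1 hx i)
    h _ _ (fun i => hxU (.inl i)) (fun i => hxU (.inr i))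

theorem kfoldEnergy_le_pow_of_card_le_one (φ : α → M) (k : ℕ) {B : Finset α} (hB : #B ≤ 1) :
    kfoldEnergy φ k B ≤ #B ^ k :=
  calc kfoldEnergy φ k B ≤ #(Fintype.piFinset fun _ : Fin k ⊕ Fin k => B) := card_filter_le _ _
    _ = #B ^ k * #B ^ k := by simp [Fintype.card_piFinset, pow_add]
    _ ≤ #B ^ k := mul_le_of_le_one_right (Nat.zero_le _) (pow_le_one₀ (Nat.zero_le _) hB)

theorem sq_card_pow_le_card_mul_kfoldEnergy (φ : α → M) (k : ℕ) (B : Finset α) :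
    (#B ^ k) ^ 2 ≤
      #((Fintype.piFinset fun _ : Fin k => B).image fun x => ∏ i, φ (x i)) * kfoldEnergy φ k B := by
  classical
  set X := Fintype.piFinset fun _ : Fin k => B with hX
  set π : (Fin k → α) → M := fun x => ∏ i, φ (x i)
  have henergy : ∑ z ∈ X.image π, #{x ∈ X | π x = z} ^ 2 ≤ kfoldEnergy φ k B := by
    calc ∑ z ∈ X.image π, #{x ∈ X | π x = z} ^ 2 = #{w ∈ X ×ˢ X | π w.1 = π w.2} := by
          rw [card_eq_sum_card_fiberwise (f := fun w => π w.1) (t := X.image π)]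
          · refine sum_congr rfl fun z _ => ?_
            rw [sq, ← card_product]
            congr 1
            ext ⟨x, y⟩
            simp only [mem_product, mem_filter]
            grind
          · intro w hw
            simp only [coe_filter, mem_product] at hw
            exact mem_image_of_mem _ hw.1.1
      _ ≤ kfoldEnergy φ k B := by
          refine card_le_card_of_injOn (fun w => Sum.elim w.1 w.2) ?_ ?_
          · intro w hw
            obtain ⟨⟨h₁, h₂⟩, h⟩ : (w.1 ∈ X ∧ w.2 ∈ X) ∧ π w.1 = π w.2 := by simpa using hw
            rw [hX, Fintype.mem_piFinset] at h₁ h₂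
            exact mem_mulSolutions.2 ⟨Sum.rec h₁ h₂, h⟩
          · intro w _ w' _ h
            exact Prod.ext_iff.2 (Sum.elim_eq_iff.1 h)
  calc (#B ^ k) ^ 2 = (∑ z ∈ X.image π, #{x ∈ X | π x = z}) ^ 2 := by
        rw [← card_eq_sum_card_image, hX, Fintype.card_piFinset_const]
    _ ≤ #(X.image π) * ∑ z ∈ X.image π, #{x ∈ X | π x = z} ^ 2 := sq_sum_le_card_mul_sum_sq
    _ ≤ _ := Nat.mul_le_mul_left _ henergy

end Energy

section Hoelder

theorem sum_prod_pow_card_le {ι Ω : Type*} [Fintype Ω] (s : Finset ι) (f : ι → Ω → ℝ≥0) :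
    (∑ ω, ∏ i ∈ s, f i ω) ^ #s ≤ ∏ i ∈ s, ∑ ω, f i ω ^ #s := by
  rcases s.eq_empty_or_nonempty with rfl | hs
  · simp
  have hn : #s ≠ 0 := hs.card_ne_zero
  let _ : MeasurableSpace Ω := ⊤
  have h := ENNReal.lintegral_prod_norm_pow_le (μ := MeasureTheory.Measure.count) s
    (f := fun i ω => (f i ω : ℝ≥0∞) ^ #s) (fun i _ => measurable_from_top.aemeasurable)
    (p := fun _ => (#s : ℝ)⁻¹) (by simp [hn]) (fun _ _ => by positivity)
  simp only [ENNReal.pow_rpow_inv_natCast hn, MeasureTheory.lintegral_count, tsum_fintype] at h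
  have := pow_le_pow_left₀ zero_le h #s
  simp only [← prod_pow, ENNReal.rpow_inv_natCast_pow hn] at this
  exact_mod_cast this

variable {α G : Type*} [CommGroup G] [DecidableEq G] {k : ℕ}

/-- The Fourier transform of the family `φ a`, `a ∈ S`, at the character `χ` of `G`. Characters of
`G` are additive characters of `Additive G`, for which Mathlib has the orthogonality relations. -/
noncomputable def charSum (φ : α → G) (S : Finset α) (χ : AddChar (Additive G) ℂ) : ℂ :=
  ∑ a ∈ S, χ (.ofMul (φ a))

theorem sum_prod_char_mul_conj_eq_ite [Fintype G] (u v : Fin k → G) :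
    ∑ χ : AddChar (Additive G) ℂ, (∏ i, χ (.ofMul (u i))) * ∏ i, conj (χ (.ofMul (v i))) =
      if ∏ i, u i = ∏ i, v i then (Fintype.card G : ℂ) else 0 := by
  have hquot : ∀ χ : AddChar (Additive G) ℂ,
      (∏ i, χ (.ofMul (u i))) * ∏ i, conj (χ (.ofMul (v i))) =
        χ (.ofMul ((∏ i, u i) / ∏ i, v i)) := by
    intro χ
    have hprod : ∀ w : Fin k → G, ∏ i, χ (.ofMul (w i)) = χ (.ofMul (∏ i, w i)) := fun w =>
      (map_prod χ.toMonoidHom (fun i => .ofAdd (.ofMul (w i))) univ).symm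
    rw [← map_prod conj, hprod, hprod, ← AddChar.map_neg_eq_conj, ← AddChar.map_add_eq_mul,
      ofMul_div, sub_eq_add_neg]
  simp only [hquot, AddChar.sum_apply_eq_ite, ofMul_eq_zero, div_eq_one, Fintype.card_additive]

theorem card_mul_card_mulSolutions_eq_sum [Fintype G] (φ : α → G)
    (S : Fin k ⊕ Fin k → Finset α) :
    (Fintype.card G : ℂ) * #(mulSolutions φ S) =
      ∑ χ, (∏ i, charSum φ (S (.inl i)) χ) * ∏ i, conj (charSum φ (S (.inr i)) χ) := by
  have hexpand : ∀ χ, (∏ i, charSum φ (S (.inl i)) χ) * ∏ i, conj (charSum φ (S (.inr i)) χ) =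
      ∑ x ∈ Fintype.piFinset S,
        (∏ i, χ (.ofMul (φ (x (.inl i))))) * ∏ i, conj (χ (.ofMul (φ (x (.inr i))))) := by
    intro χ
    have h := prod_univ_sum S fun i a =>
      Sum.elim (fun _ => χ (.ofMul (φ a))) (fun _ => conj (χ (.ofMul (φ a)))) i
    simp only [Fintype.prod_sum_type, Sum.elim_inl, Sum.elim_inr] at h
    simp only [← h, charSum, map_sum]
  simp only [hexpand]
  rw [sum_comm]
  simp only [sum_prod_char_mul_conj_eq_ite]
  rw [← sum_filter, sum_const, nsmul_eq_mul, mul_comm, mulSolutions]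

theorem card_mul_card_mulSolutions_le_sum [Fintype G] (φ : α → G)
    (S : Fin k ⊕ Fin k → Finset α) :
    (Fintype.card G : ℝ≥0) * #(mulSolutions φ S) ≤ ∑ χ, ∏ i, ‖charSum φ (S i) χ‖₊ := by
  have h := congrArg nnnorm (card_mul_card_mulSolutions_eq_sum φ S)
  rw [nnnorm_mul, Complex.nnnorm_natCast, Complex.nnnorm_natCast] at h
  rw [h]
  refine (nnnorm_sum_le _ _).trans_eq (sum_congr rfl fun χ _ => ?_)
  simp only [nnnorm_mul, nnnorm_prod, RCLike.nnnorm_conj, Fintype.prod_sum_type]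

theorem card_mul_kfoldEnergy_eq_sum [Fintype G] (φ : α → G) (k : ℕ) (B : Finset α) :
    (Fintype.card G : ℝ≥0) * kfoldEnergy φ k B = ∑ χ, ‖charSum φ B χ‖₊ ^ (2 * k) := by
  have h := card_mul_card_mulSolutions_eq_sum φ fun _ : Fin k ⊕ Fin k => B
  simp only [prod_const, card_univ, Fintype.card_fin, ← mul_pow, Complex.mul_conj'] at h
  apply NNReal.coe_injective
  apply Complex.ofReal_injective
  push_cast
  simp only [kfoldEnergy, h, pow_mul]

theorem card_mulSolutions_pow_le_of_finite [Finite G] (φ : α → G)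
    (S : Fin k ⊕ Fin k → Finset α) :
    #(mulSolutions φ S) ^ (2 * k) ≤ ∏ i, kfoldEnergy φ k (S i) := by
  have := Fintype.ofFinite G
  have hcard : #(univ : Finset (Fin k ⊕ Fin k)) = 2 * k := by simp [two_mul]
  have h : ((Fintype.card G : ℝ≥0) * #(mulSolutions φ S)) ^ (2 * k) ≤
      (Fintype.card G : ℝ≥0) ^ (2 * k) * ∏ i, (kfoldEnergy φ k (S i) : ℝ≥0) :=
    calc ((Fintype.card G : ℝ≥0) * #(mulSolutions φ S)) ^ (2 * k)
        ≤ (∑ χ, ∏ i, ‖charSum φ (S i) χ‖₊) ^ (2 * k) :=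
          pow_le_pow_left₀ zero_le (card_mul_card_mulSolutions_le_sum φ S) _
      _ ≤ ∏ i, ∑ χ, ‖charSum φ (S i) χ‖₊ ^ (2 * k) := by
          simpa only [hcard] using sum_prod_pow_card_le univ fun i => (‖charSum φ (S i) ·‖₊)
      _ = _ := by
          simp only [← card_mul_kfoldEnergy_eq_sum, prod_mul_distrib, prod_const, hcard]
  rw [mul_pow] at h
  exact_mod_cast le_of_mul_le_mul_left h (by simp [Fintype.card_pos])

end Hoelder

section Rational

variable {α : Type*} {k : ℕ}

theorem exists_int_prod_eq_iff (φ : α → ℚ) (U : Finset α) (hφ : ∀ a ∈ U, φ a ≠ 0) (k : ℕ) :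
    ∃ c : α → ℤ, (∀ a ∈ U, c a ≠ 0) ∧
      ∀ x y : Fin k → α, (∀ i, x i ∈ U) → (∀ i, y i ∈ U) →
        (∏ i, φ (x i) = ∏ i, φ (y i) ↔ ∏ i, c (x i) = ∏ i, c (y i)) := by
  obtain ⟨⟨d, hd⟩, hint⟩ := IsLocalization.exist_integer_multiples (nonZeroDivisors ℤ) U φ
  replace hd : (d : ℚ) ≠ 0 := Int.cast_ne_zero.2 (nonZeroDivisors.ne_zero hd)
  choose! c hc using hint
  replace hc : ∀ a ∈ U, (c a : ℚ) = d * φ a := fun a ha => by simpa using hc a ha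
  have hprod : ∀ x : Fin k → α, (∀ i, x i ∈ U) → ((∏ i, c (x i) : ℤ) : ℚ) = d ^ k * ∏ i, φ (x i) :=
    fun x hx => by simp [hc _ (hx _), prod_mul_distrib]
  refine ⟨c, fun a ha h => ?_, fun x y hx hy => ?_⟩
  · exact mul_ne_zero hd (hφ a ha) (by rw [← hc a ha, h, Int.cast_zero])
  · rw [← Int.cast_inj (α := ℚ), hprod x hx, hprod y hy, mul_right_inj' (pow_ne_zero k hd)]

theorem exists_prime_forall_not_dvd (Z : Finset ℤ) (hZ : 0 ∉ Z) :
    ∃ q : ℕ, q.Prime ∧ ∀ n ∈ Z, ¬ (q : ℤ) ∣ n := by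
  obtain ⟨q, hq, hprime⟩ := Nat.exists_infinite_primes ((∏ n ∈ Z, n).natAbs + 1)
  refine ⟨q, hprime, fun n hn hdvd => ?_⟩
  have hprod : ∏ n ∈ Z, n ≠ 0 := prod_ne_zero_iff.2 fun n hn h => hZ (h ▸ hn)
  have := Int.natAbs_le_of_dvd_ne_zero (hdvd.trans (dvd_prod_of_mem _ hn)) hprod
  rw [Int.natAbs_natCast] at this
  lia

theorem exists_zmod_units_prod_eq_iff (c : α → ℤ) (U : Finset α) (hc : ∀ a ∈ U, c a ≠ 0)
    (k : ℕ) :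
    ∃ (q : ℕ) (_ : Fact q.Prime) (ψ : α → (ZMod q)ˣ),
      ∀ x y : Fin k → α, (∀ i, x i ∈ U) → (∀ i, y i ∈ U) →
        (∏ i, c (x i) = ∏ i, c (y i) ↔ ∏ i, ψ (x i) = ∏ i, ψ (y i)) := by
  classical
  let X := Fintype.piFinset fun _ : Fin k => U
  let D := (X ×ˢ X).image fun w => ∏ i, c (w.1 i) - ∏ i, c (w.2 i)
  obtain ⟨q, hq, hdvd⟩ := exists_prime_forall_not_dvd ((U.image c ∪ D).erase 0) (notMem_erase _ _)
  have := Fact.mk hq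
  have hunit : ∀ a ∈ U, IsUnit (c a : ZMod q) := fun a ha => by
    rw [isUnit_iff_ne_zero, Ne, ZMod.intCast_zmod_eq_zero_iff_dvd]
    exact hdvd _ (mem_erase.2 ⟨hc a ha, mem_union_left _ (mem_image_of_mem _ ha)⟩)
  choose! ψ hψ using hunit
  refine ⟨q, this, ψ, fun x y hx hy => ?_⟩
  have hcast : ∏ i, ψ (x i) = ∏ i, ψ (y i) ↔ (q : ℤ) ∣ ∏ i, c (x i) - ∏ i, c (y i) := by
    rw [Units.ext_iff, Units.coe_prod, Units.coe_prod, ← ZMod.intCast_zmod_eq_zero_iff_dvd,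
      Int.cast_sub, sub_eq_zero, Int.cast_prod, Int.cast_prod]
    simp only [hψ _ (hx _), hψ _ (hy _)]
  rw [hcast, ← sub_eq_zero]
  refine ⟨fun h => h ▸ dvd_zero _, fun h => by_contra fun h0 => ?_⟩
  have hmem : (x, y) ∈ X ×ˢ X :=
    mem_product.2 ⟨Fintype.mem_piFinset.2 hx, Fintype.mem_piFinset.2 hy⟩
  exact hdvd _ (mem_erase.2 ⟨h0, mem_union_right _ (mem_image_of_mem _ hmem)⟩) h

theorem card_mulSolutions_pow_le_prod_kfoldEnergy (φ : α → ℚ) (S : Fin k ⊕ Fin k → Finset α)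
    (hφ : ∀ i, ∀ a ∈ S i, φ a ≠ 0) :
    #(mulSolutions φ S) ^ (2 * k) ≤ ∏ i, kfoldEnergy φ k (S i) := by
  classical
  have hU : ∀ i, S i ⊆ univ.biUnion S := fun i => subset_biUnion_of_mem S (mem_univ i)
  obtain ⟨c, hc0, hc⟩ := exists_int_prod_eq_iff φ (univ.biUnion S)
    (fun a ha => let ⟨i, _, hi⟩ := mem_biUnion.1 ha; hφ i a hi) k
  obtain ⟨q, _, ψ, hψ⟩ := exists_zmod_units_prod_eq_iff c _ hc0 k
  have hsol : ∀ T : Fin k ⊕ Fin k → Finset α, (∀ i, T i ⊆ univ.biUnion S) →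
      mulSolutions φ T = mulSolutions ψ T := fun T =>
    mulSolutions_eq_of_prod_eq_iff fun x y hx hy => (hc x y hx hy).trans (hψ x y hx hy)
  simp only [kfoldEnergy, hsol S hU, hsol _ fun _ => hU _]
  exact card_mulSolutions_pow_le_of_finite ψ S

end Rational

section Fibres

variable {α β κ : Type*} {k : ℕ} {φ : α → ℚ} {B : Finset α}

theorem le_sum_pow_of_pow_le_mul_pow {ι : Type*} {s : Finset ι} {n c : ι → ℕ} {E : ℕ} (hk : k ≠ 0)
    (hE : E ≤ ∑ i ∈ s, n i) (hn : ∀ i ∈ s, n i ^ k ≤ c i ^ k * E ^ (k - 1)) :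
    E ≤ (∑ i ∈ s, c i) ^ k := by
  rcases E.eq_zero_or_pos with rfl | hpos
  · exact Nat.zero_le _
  obtain ⟨e, he, heE⟩ : ∃ e : ℝ, 0 < e ∧ e ^ k = E :=
    ⟨(E : ℝ) ^ (k : ℝ)⁻¹, by positivity, Real.rpow_inv_natCast_pow (by positivity) hk⟩
  have hroot : ∀ i ∈ s, (n i : ℝ) ≤ c i * e ^ (k - 1) := fun i hi => by
    refine le_of_pow_le_pow_left₀ hk (by positivity) ?_
    rw [mul_pow, pow_right_comm, heE]
    exact_mod_cast hn i hi
  have hle : e ≤ ∑ i ∈ s, (c i : ℝ) := by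
    refine le_of_mul_le_mul_right ?_ (pow_pos he (k - 1))
    calc e * e ^ (k - 1) = E := by rw [mul_pow_sub_one hk, heE]
      _ ≤ ∑ i ∈ s, (n i : ℝ) := by exact_mod_cast hE
      _ ≤ (∑ i ∈ s, (c i : ℝ)) * e ^ (k - 1) := by rw [sum_mul]; exact sum_le_sum hroot
  have := pow_le_pow_left₀ he.le hle k
  rw [heE] at this
  exact_mod_cast this

theorem card_mulSolutions_pair_pow_le (hφ : ∀ a ∈ B, φ a ≠ 0) {C : Finset α} (hC : C ⊆ B)
    {s t : Fin k ⊕ Fin k} (hst : s ≠ t) :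
    #(mulSolutions φ fun i => if i ∈ ({s, t} : Finset _) then C else B) ^ k ≤
      kfoldEnergy φ k C * kfoldEnergy φ k B ^ (k - 1) := by
  have hcompl : #({s, t}ᶜ : Finset (Fin k ⊕ Fin k)) = (k - 1) * 2 := by
    simp only [card_compl, card_pair hst, Fintype.card_sum, Fintype.card_fin]
    lia
  have h := card_mulSolutions_pow_le_prod_kfoldEnergy φ
    (fun i => if i ∈ ({s, t} : Finset _) then C else B)
    (fun i a ha => hφ a (by split_ifs at ha; exacts [hC ha, ha]))
  simp only [apply_ite (kfoldEnergy φ k), prod_ite, prod_const, filter_mem_eq_inter, univ_inter,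
    ← compl_filter, card_pair hst, hcompl, pow_mul, ← mul_pow] at h
  rw [pow_right_comm] at h
  exact le_of_pow_le_pow_left₀ two_ne_zero (Nat.zero_le _) h

theorem kfoldEnergy_le_sum_of_not_injective [DecidableEq β] (l : α → β)
    (hl : ∀ x ∈ mulSolutions φ fun _ : Fin k ⊕ Fin k => B,
      ¬ Function.Injective fun i => l (x i)) :
    kfoldEnergy φ k B ≤ ∑ w ∈ (univ : Finset (Fin k ⊕ Fin k)).offDiag ×ˢ B.image l,
      #(mulSolutions φ fun i =>
        if i ∈ ({w.1.1, w.1.2} : Finset _) then {a ∈ B | l a = w.2} else B) := by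
  classical
  refine (card_le_card fun x hx => ?_).trans card_biUnion_le
  obtain ⟨s, t, hlabel, hst⟩ := Function.not_injective_iff.1 (hl x hx)
  obtain ⟨hxB, hsol⟩ := mem_mulSolutions.1 hx
  refine mem_biUnion.2 ⟨((s, t), l (x s)), ?_, mem_mulSolutions.2 ⟨fun i => ?_, hsol⟩⟩
  · exact mem_product.2 ⟨by simpa using hst, mem_image_of_mem l (hxB s)⟩
  · split_ifs with hi
    · rcases mem_insert.1 hi with rfl | hi
      · exact mem_filter.2 ⟨hxB i, rfl⟩
      · exact mem_filter.2 ⟨hxB i, mem_singleton.1 hi ▸ hlabel.symm⟩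
    · exact hxB i

theorem kfoldEnergy_le_of_fibre [DecidableEq β] (hk : k ≠ 0) (hφ : ∀ a ∈ B, φ a ≠ 0) (l : α → β)
    (hl : ∀ x ∈ mulSolutions φ fun _ : Fin k ⊕ Fin k => B,
      ¬ Function.Injective fun i => l (x i))
    {M : ℕ} (hfib : ∀ b, kfoldEnergy φ k {a ∈ B | l a = b} ≤ (M * #{a ∈ B | l a = b}) ^ k) :
    kfoldEnergy φ k B ≤ (4 * k ^ 2 * M * #B) ^ k := by
  refine (le_sum_pow_of_pow_le_mul_pow (c := fun w => M * #{a ∈ B | l a = w.2}) hk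
    (kfoldEnergy_le_sum_of_not_injective l hl) fun w hw => ?_).trans (Nat.pow_le_pow_left ?_ k)
  · have hne := (mem_offDiag.1 (mem_product.1 hw).1).2.2
    exact (card_mulSolutions_pair_pow_le hφ (filter_subset _ _) hne).trans
      (Nat.mul_le_mul_right _ (hfib w.2))
  · have hpairs : #(univ : Finset (Fin k ⊕ Fin k)).offDiag ≤ 4 * k ^ 2 := by
      rw [offDiag_card, card_univ, Fintype.card_sum, Fintype.card_fin]
      exact (Nat.sub_le _ _).trans_eq (by ring)
    calc ∑ w ∈ (univ : Finset (Fin k ⊕ Fin k)).offDiag ×ˢ B.image l, M * #{a ∈ B | l a = w.2}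
        = #(univ : Finset (Fin k ⊕ Fin k)).offDiag * (M * #B) := by
          simp only [sum_product, ← mul_sum, ← card_eq_sum_card_image, sum_const, smul_eq_mul,
            mul_left_comm M]
      _ ≤ 4 * k ^ 2 * (M * #B) := Nat.mul_le_mul_right _ hpairs
      _ = 4 * k ^ 2 * M * #B := by ring

theorem kfoldEnergy_le_of_labels (hk : k ≠ 0) (hφ : ∀ a ∈ B, φ a ≠ 0)
    (Q : Finset κ) (l : κ → α → β)
    (hl : ∀ p ∈ Q, ∀ x ∈ mulSolutions φ fun _ : Fin k ⊕ Fin k => B,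
      ¬ Function.Injective fun i => l p (x i))
    {M : ℕ} (hM : ∀ C ⊆ B, (∀ p ∈ Q, ∀ a ∈ C, ∀ b ∈ C, l p a = l p b) →
      kfoldEnergy φ k C ≤ (M * #C) ^ k) :
    kfoldEnergy φ k B ≤ ((4 * k ^ 2) ^ #Q * M * #B) ^ k := by
  classical
  induction Q using Finset.induction_on generalizing B with
  | empty => simpa using hM B Subset.rfl (by simp)
  | insert p Q hp ih =>
    rw [card_insert_of_notMem hp, pow_succ', mul_assoc (4 * k ^ 2)]
    refine kfoldEnergy_le_of_fibre hk hφ (l p) (hl p (mem_insert_self p Q)) fun b => ?_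
    have hsub : {a ∈ B | l p a = b} ⊆ B := filter_subset _ _
    refine ih (fun a ha => hφ a (hsub ha))
      (fun q hq x hx => hl q (mem_insert_of_mem hq) x (mulSolutions_mono φ (fun _ => hsub) hx))
      fun C hC hconst => hM C (hC.trans hsub) fun q hq a ha c hc => ?_
    rcases mem_insert.1 hq with rfl | hq
    · rw [(mem_filter.1 (hC ha)).2, (mem_filter.1 (hC hc)).2]
    · exact hconst q hq a ha c hc

end Fibres

section Valuation

variable {ι κ R F Γ₀ : Type*} [CommRing R] [Field F] [LinearOrderedCommGroupWithZero Γ₀]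

theorem valuation_prod_add_one_sub_one_lt (v : Valuation R Γ₀) {s : Finset ι} {x : ι → R} {ε : Γ₀}
    (hε0 : 0 < ε) (hε1 : ε ≤ 1) (hx : ∀ i ∈ s, v (x i) < ε) :
    v (∏ i ∈ s, (x i + 1) - 1) < ε := by
  classical
  induction s using Finset.induction_on with
  | empty => simpa using hε0
  | insert i s hi ih =>
    have hxi := hx i (mem_insert_self i s)
    have hprod := ih fun j hj => hx j (mem_insert_of_mem hj)
    have hsplit : ∏ j ∈ insert i s, (x j + 1) - 1 =
        x i * ∏ j ∈ s, (x j + 1) + (∏ j ∈ s, (x j + 1) - 1) := by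
      rw [prod_insert hi]
      ring
    have hunit : v (∏ j ∈ s, (x j + 1)) = 1 := by
      simpa using v.map_one_add_of_lt (hprod.trans_le hε1)
    rw [hsplit]
    exact v.map_add_lt (by rwa [map_mul, hunit, mul_one]) hprod

theorem prod_add_one_ne_of_dominant [Fintype ι] [Fintype κ] (v : Valuation R Γ₀) {y : ι → R}
    {z : κ → R} (m : ι) (hm0 : 0 < v (y m)) (hm1 : v (y m) < 1)
    (hy : ∀ i, i ≠ m → v (y i) < v (y m)) (hz : ∀ i, v (z i) < v (y m)) :
    ∏ i, (y i + 1) ≠ ∏ i, (z i + 1) := by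
  classical
  intro heq
  have hrest := valuation_prod_add_one_sub_one_lt v (s := univ.erase m) hm0 hm1.le
    fun i hi => hy i (ne_of_mem_erase hi)
  have hother := valuation_prod_add_one_sub_one_lt v (s := univ) hm0 hm1.le fun i _ => hz i
  have hunit : v (∏ i ∈ univ.erase m, (y i + 1)) = 1 := by
    simpa using v.map_one_add_of_lt (hrest.trans hm1)
  have hsplit : y m * ∏ i ∈ univ.erase m, (y i + 1) =
      (∏ i, (z i + 1) - 1) - (∏ i ∈ univ.erase m, (y i + 1) - 1) := by
    rw [← heq, ← mul_prod_erase univ (fun i => y i + 1) (mem_univ m)]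
    ring
  have hlt := v.map_sub_lt hother hrest
  rw [← hsplit, map_mul, hunit, mul_one] at hlt
  exact hlt.false

theorem not_injective_valuation_of_lt_one [Fintype ι] [Fintype κ] [Nonempty (ι ⊕ κ)]
    (v : Valuation F Γ₀) {x : ι ⊕ κ → F} (hx0 : ∀ i, x i ≠ 0) (hx1 : ∀ i, v (x i) < 1)
    (heq : ∏ i, (x (.inl i) + 1) = ∏ i, (x (.inr i) + 1)) :
    ¬ Function.Injective fun i => v (x i) := by
  intro hinj
  obtain ⟨m, hm⟩ := Finite.exists_max fun i => v (x i)
  have hlt : ∀ i, i ≠ m → v (x i) < v (x m) := fun i hi => (hm i).lt_of_ne (hinj.ne hi)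
  have hpos : 0 < v (x m) := zero_lt_iff.2 (v.ne_zero_iff.2 (hx0 m))
  rcases m with m | m
  · exact prod_add_one_ne_of_dominant v (y := fun i => x (.inl i)) (z := fun i => x (.inr i)) m
      hpos (hx1 _) (fun i hi => hlt _ (Sum.inl_injective.ne hi)) (fun i => hlt _ Sum.inr_ne_inl) heq
  · exact prod_add_one_ne_of_dominant v (y := fun i => x (.inr i)) (z := fun i => x (.inl i)) m
      hpos (hx1 _) (fun i hi => hlt _ (Sum.inr_injective.ne hi)) (fun i => hlt _ Sum.inl_ne_inr)
      heq.symm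

theorem prod_inv_add_one [Fintype ι] {x : ι → F} (hx0 : ∀ i, x i ≠ 0) :
    ∏ i, ((x i)⁻¹ + 1) = (∏ i, (x i + 1)) / ∏ i, x i := by
  rw [← prod_div_distrib]
  exact prod_congr rfl fun i _ => by rw [add_div, div_self (hx0 i), one_div, add_comm]

theorem not_injective_valuation_of_one_lt [Fintype ι] [Fintype κ] [Nonempty (ι ⊕ κ)]
    (v : Valuation F Γ₀) {x : ι ⊕ κ → F} (hx1 : ∀ i, 1 < v (x i))
    (heq : ∏ i, (x (.inl i) + 1) = ∏ i, (x (.inr i) + 1))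
    (hprod : ∏ i, x (.inl i) = ∏ i, x (.inr i)) :
    ¬ Function.Injective fun i => v (x i) := by
  have hx0 : ∀ i, x i ≠ 0 := fun i => v.ne_zero_iff.1 (zero_lt_one.trans (hx1 i)).ne'
  have hinv := not_injective_valuation_of_lt_one v (x := fun i => (x i)⁻¹)
    (fun i => inv_ne_zero (hx0 i)) (fun i => by rw [map_inv₀]; exact inv_lt_one_of_one_lt₀ (hx1 i))
    (by rw [prod_inv_add_one fun i => hx0 _, prod_inv_add_one fun i => hx0 _, heq, hprod])
  simp only [map_inv₀] at hinv
  exact fun hinj => hinv (inv_injective.comp hinj)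

theorem valuation_add_one_of_one_lt (v : Valuation R Γ₀) {x : R} (hx : 1 < v x) :
    v (x + 1) = v x :=
  v.map_add_eq_of_lt_left (by rwa [map_one])

end Valuation

section DeterminesProducts

variable {κ F Γ₀ : Type*} [Field F] [LinearOrderedCommGroupWithZero Γ₀] {k : ℕ}

/-- The `k`-fold products of elements of `B` are determined by their valuations `v p`, `p ∈ P`. -/
def DeterminesProducts (v : κ → Valuation F Γ₀) (P : Finset κ) (k : ℕ) (B : Finset F) : Prop :=
  ∀ x y : Fin k → F, (∀ i, x i ∈ B) → (∀ i, y i ∈ B) →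
    (∀ p ∈ P, v p (∏ i, x i) = v p (∏ i, y i)) → ∏ i, x i = ∏ i, y i

namespace DeterminesProducts

theorem mono {v : κ → Valuation F Γ₀} {P : Finset κ} {B C : Finset F}
    (h : DeterminesProducts v P k B) (hC : C ⊆ B) : DeterminesProducts v P k C :=
  fun x y hx hy => h x y (fun i => hC (hx i)) fun i => hC (hy i)

theorem card_le_one_of_forall_eq {v : κ → Valuation F Γ₀} {P : Finset κ} {B : Finset F}
    (h : DeterminesProducts v P k B) (hk : k ≠ 0) (hB0 : 0 ∉ B)
    (hv : ∀ p ∈ P, ∀ a ∈ B, ∀ b ∈ B, v p a = v p b) : #B ≤ 1 := by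
  refine card_le_one.2 fun a ha b hb => ?_
  let m : Fin k := ⟨0, Nat.pos_of_ne_zero hk⟩
  have hmem : ∀ i, Function.update (fun _ => b) m a i ∈ B := fun i => by
    rw [Function.update_apply]
    split_ifs <;> assumption
  have hprod := h (Function.update (fun _ => b) m a) (fun _ => b) hmem (fun _ => hb) fun p hp => by
    rw [map_prod, map_prod]
    exact prod_congr rfl fun i _ => hv p hp _ (hmem i) b hb
  rw [prod_update_of_mem (mem_univ m), sdiff_singleton_eq_erase,
    ← mul_prod_erase univ (fun _ => b) (mem_univ m)] at hprod
  exact mul_right_cancel₀ (prod_ne_zero_iff.2 fun _ _ h0 => hB0 (h0 ▸ hb)) hprod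

variable {v : κ → Valuation ℚ Γ₀} {P Q : Finset κ} {B : Finset ℚ}

theorem prod_eq_of_prod_add_one_eq (h : DeterminesProducts v P k B)
    (hQ : ∀ p ∈ Q, ∀ a ∈ B, 1 < v p a)
    (hconst : ∀ p ∈ P, p ∉ Q → ∀ a ∈ B, ∀ b ∈ B, v p a = v p b) {x y : Fin k → ℚ}
    (hx : ∀ i, x i ∈ B) (hy : ∀ i, y i ∈ B) (heq : ∏ i, (x i + 1) = ∏ i, (y i + 1)) :
    ∏ i, x i = ∏ i, y i := by
  refine h x y hx hy fun p hp => ?_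
  by_cases hpQ : p ∈ Q
  · have hv := congrArg (v p) heq
    simp only [map_prod, valuation_add_one_of_one_lt _ (hQ p hpQ _ (hx _)),
      valuation_add_one_of_one_lt _ (hQ p hpQ _ (hy _))] at hv
    rwa [map_prod, map_prod]
  · rw [map_prod, map_prod]
    exact prod_congr rfl fun i _ => hconst p hp hpQ _ (hx i) _ (hy i)

theorem kfoldEnergy_add_one_le_of_one_lt (h : DeterminesProducts v P k B) (hk : k ≠ 0)
    (hB0 : 0 ∉ B) (hB1 : -1 ∉ B) (hQ : ∀ p ∈ Q, ∀ a ∈ B, 1 < v p a)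
    (hconst : ∀ p ∈ P, p ∉ Q → ∀ a ∈ B, ∀ b ∈ B, v p a = v p b) :
    kfoldEnergy (· + 1) k B ≤ ((4 * k ^ 2) ^ #Q * #B) ^ k := by
  have : NeZero k := ⟨hk⟩
  have hne : ∀ a ∈ B, a + 1 ≠ 0 := fun a ha h0 => hB1 (eq_neg_of_add_eq_zero_left h0 ▸ ha)
  rw [← mul_one ((4 * k ^ 2) ^ #Q)]
  refine kfoldEnergy_le_of_labels hk hne Q (fun p => v p) (fun p hp x hx => ?_)
    fun C hC hCconst => ?_
  · obtain ⟨hxB, heq⟩ := mem_mulSolutions.1 hx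
    exact not_injective_valuation_of_one_lt (v p) (fun i => hQ p hp _ (hxB i)) heq
      (h.prod_eq_of_prod_add_one_eq hQ hconst (fun i => hxB _) (fun i => hxB _) heq)
  · rw [one_mul]
    refine kfoldEnergy_le_pow_of_card_le_one _ k <|
      (h.mono hC).card_le_one_of_forall_eq hk (fun h0 => hB0 (hC h0)) fun p hp a ha b hb => ?_
    by_cases hpQ : p ∈ Q
    · exact hCconst p hpQ a ha b hb
    · exact hconst p hp hpQ a (hC ha) b (hC hb)

theorem kfoldEnergy_add_one_le (h : DeterminesProducts v P k B) (hk : k ≠ 0) (hB0 : 0 ∉ B)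
    (hB1 : -1 ∉ B)
    (hsep : ∀ p ∈ P, (∀ a ∈ B, v p a < 1) ∨ (∀ a ∈ B, v p a = 1) ∨ ∀ a ∈ B, 1 < v p a) :
    kfoldEnergy (· + 1) k B ≤ ((4 * k ^ 2) ^ #P * #B) ^ k := by
  classical
  have : NeZero k := ⟨hk⟩
  have hne : ∀ a ∈ B, a + 1 ≠ 0 := fun a ha h0 => hB1 (eq_neg_of_add_eq_zero_left h0 ▸ ha)
  let Q₁ := {p ∈ P | ∀ a ∈ B, v p a < 1}
  let Q₂ := {p ∈ P \ Q₁ | ∀ a ∈ B, 1 < v p a}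
  have hcard : #Q₁ + #Q₂ ≤ #P :=
    calc #Q₁ + #Q₂ ≤ #Q₁ + #(P \ Q₁) := Nat.add_le_add_left (card_filter_le _ _) _
      _ = #P := by rw [add_comm, card_sdiff_add_card_eq_card (filter_subset _ _)]
  have hone : ∀ p ∈ P, p ∉ Q₁ → p ∉ Q₂ → ∀ a ∈ B, v p a = 1 := fun p hp h₁ h₂ =>
    ((hsep p hp).resolve_left fun hlt => h₁ (mem_filter.2 ⟨hp, hlt⟩)).resolve_right
      fun hgt => h₂ (mem_filter.2 ⟨mem_sdiff.2 ⟨hp, h₁⟩, hgt⟩)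
  calc kfoldEnergy (· + 1) k B ≤ ((4 * k ^ 2) ^ #Q₁ * (4 * k ^ 2) ^ #Q₂ * #B) ^ k := by
        refine kfoldEnergy_le_of_labels hk hne Q₁ (fun p => v p) (fun p hp x hx => ?_)
          fun C hC hCconst => ?_
        · obtain ⟨hxB, heq⟩ := mem_mulSolutions.1 hx
          exact not_injective_valuation_of_lt_one (v p) (fun i h0 => hB0 (h0 ▸ hxB i))
            (fun i => (mem_filter.1 hp).2 _ (hxB i)) heq
        · refine (h.mono hC).kfoldEnergy_add_one_le_of_one_lt hk (fun h0 => hB0 (hC h0))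
            (fun h1 => hB1 (hC h1)) (fun p hp a ha => (mem_filter.1 hp).2 a (hC ha))
            fun p hp h₂ a ha b hb => ?_
          by_cases h₁ : p ∈ Q₁
          · exact hCconst p h₁ a ha b hb
          · rw [hone p hp h₁ h₂ a (hC ha), hone p hp h₁ h₂ b (hC hb)]
    _ ≤ ((4 * k ^ 2) ^ #P * #B) ^ k := by
        rw [← pow_add]
        gcongr
        exact Nat.mul_pos (by norm_num) (pow_pos (Nat.pos_of_ne_zero hk) 2)

end DeterminesProducts

end DeterminesProducts

theorem card_le_mul_card_filter_le {α : Type*} {A : Finset α} {f : α → ℕ} {K : ℕ}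
    (hf : ∀ a ∈ A, 1 ≤ f a) (hsum : ∑ a ∈ A, f a ≤ K * #A) : #A ≤ K * #{a ∈ A | f a ≤ K} := by
  have hpoint : ∀ a ∈ A, K + 1 ≤ f a + if f a ≤ K then K else 0 := fun a ha => by
    have := hf a ha
    split_ifs <;> lia
  have hle := sum_le_sum hpoint
  rw [sum_const, smul_eq_mul, sum_add_distrib, ← sum_filter, sum_const, smul_eq_mul] at hle
  linarith

section ExtremalPartners

variable {R : Type*} [CommRing R] [LinearOrder R]

/-- The `y ∈ X` with `y ≥ x` for which `x * y` is not a product of two elements of `X`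
exceeding `x`. In a set of small doubling most elements have few extremal partners, and these
generate the part of `X` above `x` multiplicatively. -/
def extremalPartners (X : Finset R) (x : R) : Finset R :=
  {y ∈ X | x ≤ y ∧ ∀ u ∈ X, ∀ v ∈ X, x < u → x < v → u * v ≠ x * y}

theorem mem_extremalPartners {X : Finset R} {x y : R} :
    y ∈ extremalPartners X x ↔
      y ∈ X ∧ x ≤ y ∧ ∀ u ∈ X, ∀ v ∈ X, x < u → x < v → u * v ≠ x * y :=
  mem_filter

theorem le_of_mul_eq_mul_of_mem_extremalPartners {X : Finset R} {x x' y y' : R} (hx' : x' ∈ X)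
    (hy : y ∈ extremalPartners X x) (hy' : y' ∈ extremalPartners X x') (h : x * y = x' * y') :
    x' ≤ x := by
  by_contra! hlt
  obtain ⟨-, -, hextremal⟩ := mem_extremalPartners.1 hy
  obtain ⟨hyX', hle, -⟩ := mem_extremalPartners.1 hy'
  exact hextremal x' hx' y' hyX' hlt (hlt.trans_le hle) h.symm

variable [IsStrictOrderedRing R]

theorem self_mem_extremalPartners {X : Finset R} {x : R} (hx : x ∈ X) (hx0 : 0 < x) :
    x ∈ extremalPartners X x :=
  mem_extremalPartners.2 ⟨hx, le_rfl, fun _ _ _ _ hu hv =>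
    (mul_lt_mul'' hu hv hx0.le hx0.le).ne'⟩

theorem sum_card_extremalPartners_le {A : Finset R} (hA0 : 0 ∉ A) :
    ∑ a ∈ A, #(extremalPartners (A.image abs) |a|) ≤ #(A * A) := by
  have hrep : ∀ y ∈ A.image abs, ∃ r ∈ A, |r| = y := fun _ => mem_image.1
  choose! r hrA hr using hrep
  rw [← card_sigma]
  refine card_le_card_of_injOn (fun w => w.1 * r w.2) ?_ ?_
  · rintro ⟨a, y⟩ hw
    obtain ⟨ha, hy⟩ := mem_sigma.1 hw
    exact mul_mem_mul ha (hrA y (mem_extremalPartners.1 hy).1)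
  · rintro ⟨a, y⟩ hw ⟨b, z⟩ hw' (heq : a * r y = b * r z)
    obtain ⟨ha : a ∈ A, hy : y ∈ extremalPartners _ |a|⟩ := mem_sigma.1 hw
    obtain ⟨hb : b ∈ A, hz : z ∈ extremalPartners _ |b|⟩ := mem_sigma.1 hw'
    have hyX := (mem_extremalPartners.1 hy).1
    have hzX := (mem_extremalPartners.1 hz).1
    have habs : |a| * y = |b| * z := by
      simpa only [abs_mul, hr y hyX, hr z hzX] using congrArg abs heq
    have hab : |a| = |b| :=
      le_antisymm
        (le_of_mul_eq_mul_of_mem_extremalPartners (mem_image_of_mem _ ha) hz hy habs.symm)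
        (le_of_mul_eq_mul_of_mem_extremalPartners (mem_image_of_mem _ hb) hy hz habs)
    have ha0 : a ≠ 0 := fun h => hA0 (h ▸ ha)
    obtain rfl : y = z := mul_left_cancel₀ (abs_ne_zero.2 ha0) (by rw [habs, hab])
    have hr0 : r y ≠ 0 := fun h => hA0 (h ▸ hrA y hyX)
    rw [mul_right_cancel₀ hr0 heq]

theorem lt_of_mul_eq_mul_of_lt {x y u v : R} (hx : 0 < x) (hu : x < u) (hv : x < v)
    (h : u * v = x * y) : u < y :=
  lt_of_mul_lt_mul_left
    (calc x * u = u * x := mul_comm x u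
      _ < u * v := mul_lt_mul_of_pos_left hv (hx.trans hu)
      _ = x * y := h) hx.le

theorem sub_mem_span_extremalPartners {𝕜 V : Type*} [Field 𝕜] [AddCommGroup V] [Module 𝕜 V]
    {L : R → V} (hL : ∀ x y, 0 < x → 0 < y → L (x * y) = L x + L y) {X : Finset R} {x : R}
    (hx : 0 < x) {y : R} (hy : y ∈ X) (hxy : x ≤ y) :
    L y - L x ∈
      Submodule.span 𝕜 ((fun w => L w - L x) '' ((extremalPartners X x).erase x : Finset R)) := by
  set W := Submodule.span 𝕜 ((fun w => L w - L x) '' ((extremalPartners X x).erase x : Finset R))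
  refine X.isWF.induction (P := fun y => x ≤ y → L y - L x ∈ W) hy (fun y hyX ih hxy => ?_) hxy
  by_cases hmem : y ∈ extremalPartners X x
  · rcases eq_or_ne y x with rfl | hyx
    · rw [sub_self]
      exact W.zero_mem
    · exact Submodule.subset_span ⟨y, mem_coe.2 (mem_erase.2 ⟨hyx, hmem⟩), rfl⟩
  · simp only [mem_extremalPartners, not_and, not_forall, not_not] at hmem
    obtain ⟨u, hu, v, hv, hxu, hxv, huv⟩ := hmem hyX hxy
    have hLu := ih u hu (lt_of_mul_eq_mul_of_lt hx hxu hxv huv) hxu.le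
    have hLv := ih v hv (lt_of_mul_eq_mul_of_lt hx hxv hxu (mul_comm v u ▸ huv)) hxv.le
    have hsum : L u + L v = L x + L y := by
      rw [← hL u v (hx.trans hxu) (hx.trans hxv), huv, hL x y hx (hx.trans_le hxy)]
    have hsplit : L y - L x = (L u - L x) + (L v - L x) := by
      rw [sub_add_sub_comm, hsum, add_sub_add_left_eq_sub]
    rw [hsplit]
    exact W.add_mem hLu hLv

theorem exists_few_extremalPartners {A : Finset R} (hA : A.Nonempty) (hA0 : 0 ∉ A) {K : ℕ}
    (hAA : #(A * A) ≤ K * #A) :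
    ∃ a ∈ A, #(extremalPartners (A.image abs) |a|) ≤ K ∧ #A ≤ K * #{b ∈ A | |a| ≤ |b|} := by
  have hpos : ∀ a ∈ A, 1 ≤ #(extremalPartners (A.image abs) |a|) := fun a ha =>
    card_pos.2 ⟨_, self_mem_extremalPartners (mem_image_of_mem _ ha)
      (abs_pos.2 fun h => hA0 (h ▸ ha))⟩
  have hmarkov := card_le_mul_card_filter_le hpos ((sum_card_extremalPartners_le hA0).trans hAA)
  obtain ⟨a, ha, hmin⟩ := exists_min_image _ abs
    (card_pos.1 (Nat.pos_of_mul_pos_left (hA.card_pos.trans_le hmarkov)))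
  refine ⟨a, (mem_filter.1 ha).1, (mem_filter.1 ha).2, hmarkov.trans (Nat.mul_le_mul_left _ ?_)⟩
  exact card_le_card fun b hb => mem_filter.2 ⟨(mem_filter.1 hb).1, hmin b hb⟩

end ExtremalPartners

section SmallDoubling

theorem exists_determining_coordinates {𝕜 κ : Type*} [Field 𝕜] (V : Submodule 𝕜 (κ → 𝕜))
    [FiniteDimensional 𝕜 V] :
    ∃ P : Finset κ, #P ≤ Module.finrank 𝕜 V ∧ ∀ w ∈ V, (∀ p ∈ P, w p = 0) → w = 0 := by
  classical
  induction hn : Module.finrank 𝕜 V using Nat.strong_induction_on generalizing V with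
  | _ n ih =>
    subst hn
    rcases eq_or_ne V ⊥ with rfl | hV
    · exact ⟨∅, Nat.zero_le _, fun w hw _ => (Submodule.mem_bot 𝕜).1 hw⟩
    obtain ⟨w, hw, hw0⟩ := Submodule.exists_mem_ne_zero_of_ne_bot hV
    obtain ⟨p, hp⟩ := Function.ne_iff.1 hw0
    have hlt : V ⊓ LinearMap.ker (LinearMap.proj (R := 𝕜) (φ := fun _ : κ => 𝕜) p) < V :=
      inf_le_left.lt_of_ne fun h => hp (LinearMap.mem_ker.1 (inf_eq_left.1 h hw))
    have hrank := Submodule.finrank_lt_finrank_of_lt hlt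
    have := Submodule.finiteDimensional_of_le hlt.le
    obtain ⟨P, hP, hinj⟩ := ih _ hrank _ rfl
    refine ⟨insert p P, (card_insert_le p P).trans (hP.trans_lt hrank), fun u hu huP => ?_⟩
    exact hinj u ⟨hu, huP p (mem_insert_self p P)⟩ fun q hq => huP q (mem_insert_of_mem hq)

variable {κ F : Type*} [Field F] (v : κ → Valuation F ℤᵐ⁰)

/-- The vector of additive valuations of `x`, with entries in `ℚ` so that linear algebra applies;
`logVector v 0 = 0` because `WithZero.log 0 = 0`. -/
def logVector (x : F) (p : κ) : ℚ :=
  (WithZero.log (v p x) : ℤ)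

theorem logVector_mul {x y : F} (hx : x ≠ 0) (hy : y ≠ 0) :
    logVector v (x * y) = logVector v x + logVector v y := by
  funext p
  have hpx : v p x ≠ 0 := (v p).ne_zero_iff.2 hx
  have hpy : v p y ≠ 0 := (v p).ne_zero_iff.2 hy
  simp only [logVector, Pi.add_apply, map_mul, WithZero.log_mul hpx hpy, Int.cast_add]

theorem logVector_prod {ι : Type*} (s : Finset ι) {x : ι → F} (hx : ∀ i ∈ s, x i ≠ 0) :
    logVector v (∏ i ∈ s, x i) = ∑ i ∈ s, logVector v (x i) := by
  classical
  induction s using Finset.induction_on with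
  | empty => ext p; simp [logVector]
  | insert i s hi ih =>
    have hs : ∀ j ∈ s, x j ≠ 0 := fun j hj => hx j (mem_insert_of_mem hj)
    rw [prod_insert hi, sum_insert hi, ← ih hs,
      logVector_mul v (hx i (mem_insert_self i s)) (prod_ne_zero_iff.2 hs)]

theorem logVector_apply_eq_iff {x y : F} (hx : x ≠ 0) (hy : y ≠ 0) {p : κ} :
    logVector v x p = logVector v y p ↔ v p x = v p y := by
  have hpx : v p x ≠ 0 := (v p).ne_zero_iff.2 hx
  have hpy : v p y ≠ 0 := (v p).ne_zero_iff.2 hy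
  rw [logVector, logVector, Int.cast_inj]
  exact ⟨fun h => by rw [← WithZero.exp_log hpx, h, WithZero.exp_log hpy], congrArg _⟩

variable [LinearOrder F]

theorem logVector_abs (x : F) : logVector v |x| = logVector v x := by
  funext p
  rcases abs_choice x with h | h <;> simp only [logVector, h, Valuation.map_neg]

variable [IsStrictOrderedRing F]

theorem exists_large_subset_logVector_sub_mem {A : Finset F} (hA : A.Nonempty) (hA0 : 0 ∉ A)
    {K : ℕ} (hAA : #(A * A) ≤ K * #A) :
    ∃ B ⊆ A, #A ≤ K * #B ∧ ∃ V : Submodule ℚ (κ → ℚ), FiniteDimensional ℚ V ∧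
      Module.finrank ℚ V ≤ K - 1 ∧ ∀ b ∈ B, ∀ c ∈ B, logVector v b - logVector v c ∈ V := by
  classical
  obtain ⟨a, ha, haK, hcard⟩ := exists_few_extremalPartners hA hA0 hAA
  have ha0 : 0 < |a| := abs_pos.2 fun h => hA0 (h ▸ ha)
  let D := ((extremalPartners (A.image abs) |a|).erase |a|).image fun w =>
    logVector v w - logVector v |a|
  have hD : #D ≤ K - 1 := by
    refine card_image_le.trans ?_
    rw [card_erase_of_mem (self_mem_extremalPartners (mem_image_of_mem _ ha) ha0)]
    exact Nat.sub_le_sub_right haK 1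
  have hspan : ∀ b ∈ A, |a| ≤ |b| → logVector v b - logVector v |a| ∈
      Submodule.span ℚ (D : Set (κ → ℚ)) := fun b hb hab => by
    rw [← logVector_abs v b, coe_image]
    exact sub_mem_span_extremalPartners (fun x y hx hy => logVector_mul v hx.ne' hy.ne') ha0
      (mem_image_of_mem _ hb) hab
  refine ⟨{b ∈ A | |a| ≤ |b|}, filter_subset _ _, hcard, Submodule.span ℚ D, inferInstance,
    (finrank_span_finset_le_card D).trans hD, fun b hb c hc => ?_⟩
  rw [← sub_sub_sub_cancel_right (logVector v b) _ (logVector v |a|)]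
  rw [mem_filter] at hb hc
  exact Submodule.sub_mem _ (hspan b hb.1 hb.2) (hspan c hc.1 hc.2)

theorem exists_large_subset_forall_valuation_prod_eq {A : Finset F} (hA : A.Nonempty)
    (hA0 : 0 ∉ A) {K : ℕ} (hAA : #(A * A) ≤ K * #A) :
    ∃ B ⊆ A, #A ≤ K * #B ∧ ∃ P : Finset κ, #P ≤ K - 1 ∧
      ∀ (k : ℕ) (x y : Fin k → F), (∀ i, x i ∈ B) → (∀ i, y i ∈ B) →
        (∀ p ∈ P, v p (∏ i, x i) = v p (∏ i, y i)) → ∀ p, v p (∏ i, x i) = v p (∏ i, y i) := by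
  obtain ⟨B, hBA, hcard, V, _, hV, hsub⟩ := exists_large_subset_logVector_sub_mem v hA hA0 hAA
  obtain ⟨P, hP, hinj⟩ := exists_determining_coordinates V
  refine ⟨B, hBA, hcard, P, hP.trans hV, fun k x y hx hy hxy p => ?_⟩
  have hne : ∀ z : Fin k → F, (∀ i, z i ∈ B) → ∀ i ∈ univ, z i ≠ 0 := fun z hz i _ h =>
    hA0 (hBA (h ▸ hz i))
  have hxne := prod_ne_zero_iff.2 (hne x hx)
  have hyne := prod_ne_zero_iff.2 (hne y hy)
  have hmem : logVector v (∏ i, x i) - logVector v (∏ i, y i) ∈ V := by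
    rw [logVector_prod v _ (hne x hx), logVector_prod v _ (hne y hy), ← sum_sub_distrib]
    exact V.sum_mem fun i _ => hsub _ (hx i) _ (hy i)
  have hzero := hinj _ hmem fun q hq =>
    sub_eq_zero.2 ((logVector_apply_eq_iff v hxne hyne).2 (hxy q hq))
  exact (logVector_apply_eq_iff v hxne hyne).1 (congrFun (sub_eq_zero.1 hzero) p)

end SmallDoubling

section SignAndSize

theorem exists_card_le_card_mul_card_filter_eq {α β : Type*} [Fintype β] [Nonempty β]
    [DecidableEq β] (B : Finset α) (σ : α → β) :
    ∃ y, #B ≤ Fintype.card β * #{a ∈ B | σ a = y} := by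
  obtain ⟨y, -, hy⟩ := exists_max_image univ (fun y => #{a ∈ B | σ a = y}) univ_nonempty
  refine ⟨y, ?_⟩
  rw [mul_comm]
  exact card_le_mul_card_image_of_maps_to (fun a _ => mem_univ (σ a)) _ hy

variable {κ F Γ₀ : Type*} [Field F] [LinearOrder F] [LinearOrderedCommGroupWithZero Γ₀]

theorem exists_large_separated_subset (v : κ → Valuation F Γ₀) (P : Finset κ) (B : Finset F) :
    ∃ C ⊆ B, #B ≤ 2 * 3 ^ #P * #C ∧ ((∀ a ∈ C, 0 < a) ∨ ∀ a ∈ C, a ≤ 0) ∧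
      ∀ p ∈ P, (∀ a ∈ C, v p a < 1) ∨ (∀ a ∈ C, v p a = 1) ∨ ∀ a ∈ C, 1 < v p a := by
  classical
  let σ : F → Bool × (P → Ordering) := fun a => (decide (0 < a), fun p => cmp (v p a) 1)
  obtain ⟨⟨s, t⟩, hcard⟩ := exists_card_le_card_mul_card_filter_eq B σ
  have hσ : ∀ a ∈ ({a ∈ B | σ a = (s, t)} : Finset F),
      decide (0 < a) = s ∧ ∀ p : P, cmp (v p a) 1 = t p := fun a ha =>
    (Prod.mk.inj (mem_filter.1 ha).2).imp_right congrFun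
  refine ⟨{a ∈ B | σ a = (s, t)}, filter_subset _ _, ?_, ?_, fun p hp => ?_⟩
  · have hOrdering : Fintype.card Ordering = 3 := rfl
    rwa [Fintype.card_prod, Fintype.card_fun, Fintype.card_coe, Fintype.card_bool,
      hOrdering] at hcard
  · cases s
    · exact .inr fun a ha => not_lt.1 (of_decide_eq_false (hσ a ha).1)
    · exact .inl fun a ha => of_decide_eq_true (hσ a ha).1
  · have hcmp := fun a ha => (hσ a ha).2 ⟨p, hp⟩
    cases ht : t ⟨p, hp⟩ <;> rw [ht] at hcmp
    · exact .inl fun a ha => (cmp_eq_lt_iff _ _).1 (hcmp a ha)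
    · exact .inr (.inl fun a ha => (cmp_eq_eq_iff _ _).1 (hcmp a ha))
    · exact .inr (.inr fun a ha => (cmp_eq_gt_iff _ _).1 (hcmp a ha))

theorem prod_eq_of_abs_prod_eq [IsStrictOrderedRing F] {ι : Type*} [Fintype ι] {C : Finset F}
    (hC : (∀ a ∈ C, 0 < a) ∨ ∀ a ∈ C, a ≤ 0) {x y : ι → F} (hx : ∀ i, x i ∈ C)
    (hy : ∀ i, y i ∈ C) (h : |∏ i, x i| = |∏ i, y i|) : ∏ i, x i = ∏ i, y i := by
  rw [abs_prod, abs_prod] at h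
  rcases hC with hC | hC
  · simpa only [abs_of_pos (hC _ (hx _)), abs_of_pos (hC _ (hy _))] using h
  · simp only [abs_of_nonpos (hC _ (hx _)), abs_of_nonpos (hC _ (hy _)), prod_neg] at h
    exact mul_left_cancel₀ (pow_ne_zero _ (neg_ne_zero.2 one_ne_zero)) h

end SignAndSize

section PadicFamily

/-- The family of all `p`-adic valuations of `ℚ`, indexed by the primes. -/
def padicFamily (p : Nat.Primes) : Valuation ℚ ℤᵐ⁰ :=
  haveI := Fact.mk p.2
  Rat.padicValuation p

theorem abs_eq_one_of_padicFamily_eq_one {r : ℚ} (h : ∀ p, padicFamily p r = 1) : |r| = 1 := by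
  have hden : r.den = 1 := Nat.eq_one_iff_not_exists_prime_dvd.2 fun p hp =>
    haveI := Fact.mk hp
    Rat.padicValuation_le_one_iff.1 (h ⟨p, hp⟩).le
  obtain ⟨n, rfl⟩ : ∃ n : ℤ, (n : ℚ) = r := ⟨r.num, Rat.coe_int_num_of_den_eq_one hden⟩
  have hnum : n.natAbs = 1 := Nat.eq_one_iff_not_exists_prime_dvd.2 fun p hp hdvd =>
    haveI := Fact.mk hp
    Int.padicValuation_eq_one_iff.1 ((Rat.padicValuation_cast p n).symm.trans (h ⟨p, hp⟩))
      (Int.natCast_dvd.2 hdvd)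
  rw [← Int.cast_abs, Int.abs_eq_natAbs, hnum, Nat.cast_one, Int.cast_one]

theorem abs_eq_abs_of_padicFamily_eq {x y : ℚ} (hy : y ≠ 0)
    (h : ∀ p, padicFamily p x = padicFamily p y) : |x| = |y| := by
  have habs : |x / y| = 1 := abs_eq_one_of_padicFamily_eq_one fun p => by
    rw [map_div₀, h, div_self ((padicFamily p).ne_zero_iff.2 hy)]
  rwa [abs_div, div_eq_one_iff_eq (abs_ne_zero.2 hy)] at habs

theorem exists_large_determining_subset {A : Finset ℚ} (hA : A.Nonempty) (hA0 : 0 ∉ A) {K : ℕ}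
    (hAA : #(A * A) ≤ K * #A) :
    ∃ C ⊆ A, ∃ P : Finset Nat.Primes, #P ≤ K - 1 ∧ #A ≤ 2 * K * 3 ^ #P * #C ∧
      (∀ k, DeterminesProducts padicFamily P k C) ∧
      ∀ p ∈ P, (∀ a ∈ C, padicFamily p a < 1) ∨ (∀ a ∈ C, padicFamily p a = 1) ∨
        ∀ a ∈ C, 1 < padicFamily p a := by
  obtain ⟨B, hBA, hAB, P, hP, hdet⟩ :=
    exists_large_subset_forall_valuation_prod_eq padicFamily hA hA0 hAA
  obtain ⟨C, hCB, hBC, hsign, hsep⟩ := exists_large_separated_subset padicFamily P B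
  refine ⟨C, hCB.trans hBA, P, hP, ?_, fun k x y hx hy hxy => ?_, hsep⟩
  · calc #A ≤ K * (2 * 3 ^ #P * #C) := hAB.trans (Nat.mul_le_mul_left K hBC)
      _ = 2 * K * 3 ^ #P * #C := by ring
  · refine prod_eq_of_abs_prod_eq hsign hx hy (abs_eq_abs_of_padicFamily_eq ?_ ?_)
    · exact prod_ne_zero_iff.2 fun i _ h0 => hA0 (hBA (hCB (h0 ▸ hy i)))
    · exact hdet k x y (fun i => hCB (hx i)) (fun i => hCB (hy i)) hxy

end PadicFamily

section ProductsOfShifts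

theorem kfoldProd_mono (k : ℕ) {B C : Finset ℚ} (h : B ⊆ C) : kfoldProd k B ⊆ kfoldProd k C :=
  image_subset_image (Fintype.piFinset_subset _ _ fun _ => h)

theorem kfoldProd_image {α : Type*} (k : ℕ) (f : α → ℚ) (B : Finset α) :
    kfoldProd k (B.image f) =
      (Fintype.piFinset fun _ : Fin k => B).image fun x => ∏ i, f (x i) := by
  rw [kfoldProd, Fintype.piFinset_image, image_image]
  rfl

theorem kfoldProd_smul (k : ℕ) (c : ℚ) (B : Finset ℚ) :
    kfoldProd k (c • B) = c ^ k • kfoldProd k B := by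
  rw [← image_smul, kfoldProd_image, ← image_smul, kfoldProd, image_image]
  simp only [smul_eq_mul, prod_mul_distrib, prod_const, card_univ, Fintype.card_fin,
    Function.comp_def]

theorem DeterminesProducts.card_pow_le_mul_card_kfoldProd {κ Γ₀ : Type*}
    [LinearOrderedCommGroupWithZero Γ₀] {v : κ → Valuation ℚ Γ₀} {P : Finset κ} {k : ℕ}
    {C : Finset ℚ} (h : DeterminesProducts v P k C) (hk : k ≠ 0) (hC0 : 0 ∉ C) (hC1 : -1 ∉ C)
    (hsep : ∀ p ∈ P, (∀ a ∈ C, v p a < 1) ∨ (∀ a ∈ C, v p a = 1) ∨ ∀ a ∈ C, 1 < v p a) :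
    #C ^ k ≤ ((4 * k ^ 2) ^ #P) ^ k * #(kfoldProd k (C.image fun a => a + 1)) := by
  rcases C.eq_empty_or_nonempty with rfl | hC
  · simp [hk]
  refine Nat.le_of_mul_le_mul_right ?_ (pow_pos hC.card_pos k)
  calc #C ^ k * #C ^ k = (#C ^ k) ^ 2 := (sq _).symm
    _ ≤ #(kfoldProd k (C.image fun a => a + 1)) * kfoldEnergy (· + 1) k C := by
        rw [kfoldProd_image]
        exact sq_card_pow_le_card_mul_kfoldEnergy (· + 1) k C
    _ ≤ #(kfoldProd k (C.image fun a => a + 1)) * ((4 * k ^ 2) ^ #P * #C) ^ k :=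
        Nat.mul_le_mul_left _ (h.kfoldEnergy_add_one_le hk hC0 hC1 hsep)
    _ = ((4 * k ^ 2) ^ #P) ^ k * #(kfoldProd k (C.image fun a => a + 1)) * #C ^ k := by
        rw [mul_pow]
        ring

theorem card_pow_le_mul_card_kfoldProd_add_one {A : Finset ℚ} (hA0 : 0 ∉ A) (hA1 : -1 ∉ A)
    {K : ℕ} (hAA : #(A * A) ≤ K * #A) {k : ℕ} (hk : k ≠ 0) :
    #A ^ k ≤ (2 * K * (12 * k ^ 2) ^ (K - 1)) ^ k *
      #(kfoldProd k (A.image fun a => a + 1)) := by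
  rcases A.eq_empty_or_nonempty with rfl | hA
  · simp [hk]
  obtain ⟨C, hCA, P, hP, hAC, hdet, hsep⟩ := exists_large_determining_subset hA hA0 hAA
  have hC := (hdet k).card_pow_le_mul_card_kfoldProd hk (fun h => hA0 (hCA h))
    (fun h => hA1 (hCA h)) hsep
  calc #A ^ k ≤ (2 * K * 3 ^ #P * #C) ^ k := Nat.pow_le_pow_left hAC k
    _ = (2 * K * 3 ^ #P) ^ k * #C ^ k := mul_pow _ _ _
    _ ≤ (2 * K * 3 ^ #P) ^ k *
          (((4 * k ^ 2) ^ #P) ^ k * #(kfoldProd k (C.image fun a => a + 1))) :=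
        Nat.mul_le_mul_left _ hC
    _ = (2 * K * (12 * k ^ 2) ^ #P) ^ k * #(kfoldProd k (C.image fun a => a + 1)) := by
        rw [← mul_assoc, ← mul_pow, mul_assoc _ (3 ^ #P), ← mul_pow, ← mul_assoc 3 4,
          show 3 * 4 = 12 from rfl]
    _ ≤ (2 * K * (12 * k ^ 2) ^ (K - 1)) ^ k * #(kfoldProd k (A.image fun a => a + 1)) := by
        have hbase : 1 ≤ 12 * k ^ 2 :=
          Nat.mul_pos (by norm_num) (pow_pos (Nat.pos_of_ne_zero hk) 2)
        gcongr
        exact kfoldProd_mono k (image_subset_image hCA)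

theorem card_pow_le_mul_card_kfoldProd_add {A : Finset ℚ} (hA0 : 0 ∉ A) {c : ℚ} (hc : c ≠ 0)
    (hcA : -c ∉ A) {K : ℕ} (hAA : #(A * A) ≤ K * #A) {k : ℕ} (hk : k ≠ 0) :
    #A ^ k ≤ (2 * K * (12 * k ^ 2) ^ (K - 1)) ^ k *
      #(kfoldProd k (A.image fun a => a + c)) := by
  have hc' : c⁻¹ ≠ 0 := inv_ne_zero hc
  have hshift : (c⁻¹ • A).image (fun a => a + 1) = c⁻¹ • A.image fun a => a + c := by
    simp only [← image_smul, image_image, Function.comp_def, smul_eq_mul, mul_add,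
      inv_mul_cancel₀ hc]
  have hcard : #((c⁻¹ • A) * (c⁻¹ • A)) ≤ K * #(c⁻¹ • A) := by
    rwa [smul_mul_smul_comm, card_smul_finset₀ (mul_ne_zero hc' hc'), card_smul_finset₀ hc']
  have h0 : (0 : ℚ) ∉ c⁻¹ • A := by rwa [zero_mem_smul_finset_iff hc']
  have h1 : (-1 : ℚ) ∉ c⁻¹ • A := by
    rwa [mem_inv_smul_finset_iff₀ hc, smul_eq_mul, mul_neg_one]
  have h := card_pow_le_mul_card_kfoldProd_add_one h0 h1 hcard hk
  rwa [hshift, kfoldProd_smul, card_smul_finset₀ (pow_ne_zero k hc'), card_smul_finset₀ hc'] at h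

theorem two_mul_mul_pow_le {k K : ℕ} (hk : 2 ≤ k) (hK : 0 < K) :
    2 * K * (12 * k ^ 2) ^ (K - 1) ≤ (8 * k ^ 4) ^ K := by
  obtain ⟨n, rfl⟩ := Nat.exists_eq_succ_of_ne_zero hK.ne'
  have hsq : 4 ≤ k ^ 2 := Nat.pow_le_pow_left hk 2
  have hquartic : 4 * k ^ 2 ≤ k ^ 4 :=
    (Nat.mul_le_mul_right (k ^ 2) hsq).trans_eq (pow_add k 2 2).symm
  calc 2 * (n + 1) * (12 * k ^ 2) ^ n ≤ 2 * 2 ^ (n + 1) * (12 * k ^ 2) ^ n := by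
        gcongr
        exact Nat.lt_two_pow_self.le
    _ = 4 * (24 * k ^ 2) ^ n := by
        rw [show 24 * k ^ 2 = 2 * (12 * k ^ 2) by ring, mul_pow 2]
        ring
    _ ≤ (8 * k ^ 4) * (8 * k ^ 4) ^ n := by
        apply Nat.mul_le_mul _ (Nat.pow_le_pow_left _ n) <;> linarith
    _ = (8 * k ^ 4) ^ (n + 1) := (pow_succ' _ _).symm

end ProductsOfShifts

theorem product_of_general_shift_lower_bound
    (A : Finset ℚ) (hA0 : (0 : ℚ) ∉ A)
    (K : ℕ) (hK : 0 < K) (hAA : (A * A).card ≤ K * A.card)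
    (k : ℕ) (hk : 2 ≤ k)
    (lam : ℚ) (hlam : lam ≠ 0) (hlamA : -lam ∉ A) :
    (A.card : ℝ) ^ k / (8 * (k : ℝ) ^ 4) ^ (k * K) ≤
      ((kfoldProd k (A.image fun a => a + lam)).card : ℝ) := by
  have hk0 : k ≠ 0 := by lia
  have hbound : #A ^ k ≤
      (8 * k ^ 4) ^ (k * K) * #(kfoldProd k (A.image fun a => a + lam)) :=
    calc #A ^ k ≤ (2 * K * (12 * k ^ 2) ^ (K - 1)) ^ k *
          #(kfoldProd k (A.image fun a => a + lam)) :=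
        card_pow_le_mul_card_kfoldProd_add hA0 hlam hlamA hAA hk0
      _ ≤ ((8 * k ^ 4) ^ K) ^ k * #(kfoldProd k (A.image fun a => a + lam)) := by
        gcongr
        exact two_mul_mul_pow_le hk hK
      _ = (8 * k ^ 4) ^ (k * K) * #(kfoldProd k (A.image fun a => a + lam)) := by
        rw [← pow_mul, mul_comm K k]
  rw [div_le_iff₀' (by positivity)]
  exact_mod_cast hbound
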